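/- Let u ∈ F₂ and suppose that there exists an automorphism φ of F₂ such that some conjugate of φ(u) is positive. Then there exist a chain ψ of type (C1) or of type (C2) whose length is at most 2‖u‖+3 and a Whitehead automorphism β of type (W1) such that some conjugate of β(ψ(u)) is positive. -/

import Mathlib

noncomputable section

/-- The free group of rank two. -/
abbrev F : Type := FreeGroup (Fin 2)

/-- The generator `a`. -/
def ga : F := FreeGroup.of 0

/-- The generator `b`. -/
def gb : F := FreeGroup.of 1

/-- Build an automorphism of `F` from images of the generators together with
an explicit inverse. -/
def mkAut (x y xi yi : F)
    (h1 : FreeGroup.lift ![xi, yi] x = ga)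
    (h2 : FreeGroup.lift ![xi, yi] y = gb)
    (h3 : FreeGroup.lift ![x, y] xi = ga)
    (h4 : FreeGroup.lift ![x, y] yi = gb) : MulAut F :=
  MonoidHom.toMulEquiv (FreeGroup.lift ![x, y]) (FreeGroup.lift ![xi, yi])
    (by
      ext i
      fin_cases i
      · simpa [ga] using h1
      · simpa [gb] using h2)
    (by
      ext i
      fin_cases i
      · simpa [ga] using h3
      · simpa [gb] using h4)

/-- `σ : a ↦ ab, b ↦ b`. -/
def σ : MulAut F :=
  mkAut (ga * gb) gb (ga * gb⁻¹) gb
    (by simp [ga, gb]) (by simp [ga, gb]) (by simp [ga, gb]) (by simp [ga, gb])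

/-- `τ : a ↦ a, b ↦ ba`. -/
def τ : MulAut F :=
  mkAut ga (gb * ga) ga (gb * ga⁻¹)
    (by simp [ga, gb]) (by simp [ga, gb]) (by simp [ga, gb]) (by simp [ga, gb])

/-- `δ₁ : a ↦ b⁻¹ab, b ↦ b`. -/
def δ₁ : MulAut F :=
  mkAut (gb⁻¹ * ga * gb) gb (gb * ga * gb⁻¹) gb
    (by simp [ga, gb, mul_assoc]) (by simp [ga, gb]) (by simp [ga, gb, mul_assoc]) (by simp [ga, gb])

/-- `δ₂ : a ↦ bab⁻¹, b ↦ b`. -/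
def δ₂ : MulAut F :=
  mkAut (gb * ga * gb⁻¹) gb (gb⁻¹ * ga * gb) gb
    (by simp [ga, gb, mul_assoc]) (by simp [ga, gb]) (by simp [ga, gb, mul_assoc]) (by simp [ga, gb])

/-- `δ₃ : a ↦ a, b ↦ a⁻¹ba`. -/
def δ₃ : MulAut F :=
  mkAut ga (ga⁻¹ * gb * ga) ga (ga * gb * ga⁻¹)
    (by simp [ga, gb]) (by simp [ga, gb, mul_assoc]) (by simp [ga, gb]) (by simp [ga, gb, mul_assoc])

/-- `δ₄ : a ↦ a, b ↦ aba⁻¹`. -/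
def δ₄ : MulAut F :=
  mkAut ga (ga * gb * ga⁻¹) ga (ga⁻¹ * gb * ga)
    (by simp [ga, gb]) (by simp [ga, gb, mul_assoc]) (by simp [ga, gb]) (by simp [ga, gb, mul_assoc])

/-- `π : a ↦ b, b ↦ a⁻¹`. -/
def pi' : MulAut F :=
  mkAut gb ga⁻¹ gb⁻¹ ga
    (by simp [ga, gb]) (by simp [ga, gb]) (by simp [ga, gb]) (by simp [ga, gb])

/-- Word length of (the reduced word representing) an element of `F`. -/
def len (w : F) : ℕ := w.toWord.length

/-- Cyclic length: minimal word length among all conjugates. -/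
def cyclen (w : F) : ℕ := sInf {n | ∃ g : F, len (g * w * g⁻¹) = n}

/-- The chain `τ^{m_k}σ^{l_k}⋯τ^{m_1}σ^{l_1}` of type (C1) determined by the list
`[(l_k, m_k), …, (l_1, m_1)]` of pairs of exponents. -/
def chainC1 (c : List (ℕ × ℕ)) : MulAut F :=
  (c.map fun p => τ ^ p.2 * σ ^ p.1).prod

/-- The chain `τ^{-m_k}σ^{-l_k}⋯τ^{-m_1}σ^{-l_1}` of type (C2) determined by the list
`[(l_k, m_k), …, (l_1, m_1)]` of pairs of exponents. -/
def chainC2 (c : List (ℕ × ℕ)) : MulAut F :=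
  (c.map fun p => (τ ^ p.2)⁻¹ * (σ ^ p.1)⁻¹).prod

/-- Number of factors of `σ` in a chain. -/
def sigmaCount (c : List (ℕ × ℕ)) : ℕ := (c.map Prod.fst).sum

/-- Number of factors of `τ` in a chain. -/
def tauCount (c : List (ℕ × ℕ)) : ℕ := (c.map Prod.snd).sum

/-- The length `Σ (l_i + m_i)` of a chain. -/
def chainLen (c : List (ℕ × ℕ)) : ℕ := sigmaCount c + tauCount c

/-- A Whitehead automorphism of type (W1): it permutes `{a, a⁻¹, b, b⁻¹}`. -/
def IsW1 (β : MulAut F) : Prop :=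
  β ga ∈ ({ga, ga⁻¹, gb, gb⁻¹} : Set F) ∧ β gb ∈ ({ga, ga⁻¹, gb, gb⁻¹} : Set F)

/-- A chain of type (C1). -/
def IsC1 (φ : MulAut F) : Prop := ∃ c : List (ℕ × ℕ), c ≠ [] ∧ φ = chainC1 c

/-- A chain of type (C2). -/
def IsC2 (φ : MulAut F) : Prop := ∃ c : List (ℕ × ℕ), c ≠ [] ∧ φ = chainC2 c

/-- A positive element: a product of the generators `a` and `b`. -/
def IsPositive (w : F) : Prop := w ∈ Submonoid.closure ({ga, gb} : Set F)

/-- The four automorphisms `δ₁, δ₂, δ₃, δ₄`. -/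
def δIdx : Fin 4 → MulAut F := ![δ₁, δ₂, δ₃, δ₄]

/-!
By Nielsen's theorem every automorphism is `k * ψ`, where `k` permutes the generators up to
inversion and conjugation and `ψ` is a chain of type (C1) or (C2). Hence, if some conjugate of
`φ u` is positive, then for some chain `ψ` the cyclic word of `ψ u` contains no generator with both
signs, and it is enough to shorten `ψ` without losing this. Inverting one of the generators
exchanges the types (C1) and (C2), and if the signs of the two generators in `ψ u` differ, then all
pullbacks along (C1) have the same signs, so suppose, after replacing `u` by its inverse if
necessary, that `ψ u` is positive and that `ψ` is of type (C1).

Pull the positive cyclic word back one transvection `ρ` at a time, towards `u`. No cyclic word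
obtained in this way has adjacent letters `a⁻¹` and `b⁻¹` in either order, which makes the
reduction of its preimage local and shows that the number of inverse letters never decreases. It
increases strictly unless the preimage is a power of a generator, or is made positive by the
transvection other than `ρ`; in these cases the chain found so far can be replaced by one of length
at most one. As the number of inverse letters in a cyclic word of `u` is at most `‖u‖`, this yields
a chain of length at most `‖u‖ + 1`.
-/

section CommonPrefix

variable {γ : Type*} [DecidableEq γ]

/-- The length of the longest common prefix of two lists. -/
def commonPrefixLength : List γ → List γ → ℕ
  | x :: L, y :: M => if x = y then commonPrefixLength L M + 1 else 0
  | _, _ => 0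

lemma min_commonPrefixLength_le :
    ∀ K L M : List γ,
      min (commonPrefixLength K L) (commonPrefixLength L M) ≤ commonPrefixLength K M
  | x :: K, y :: L, z :: M => by
    have ih := min_commonPrefixLength_le K L M
    grind [commonPrefixLength]
  | [], _, _ => by simp [commonPrefixLength]
  | _ :: _, [], _ => by simp [commonPrefixLength]
  | _ :: _, _ :: _, [] => by simp [commonPrefixLength]

lemma take_commonPrefixLength :
    ∀ L M : List γ, L.take (commonPrefixLength L M) = M.take (commonPrefixLength L M)
  | x :: L, y :: M => by
    have ih := take_commonPrefixLength L M
    grind [commonPrefixLength]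
  | [], _ => by simp [commonPrefixLength]
  | _ :: _, [] => by simp [commonPrefixLength]

lemma commonPrefixLength_le_length :
    ∀ L M : List γ,
      commonPrefixLength L M ≤ L.length ∧ commonPrefixLength L M ≤ M.length
  | x :: L, y :: M => by
    have ih := commonPrefixLength_le_length L M
    grind [commonPrefixLength]
  | [], _ => by simp [commonPrefixLength]
  | _ :: _, [] => by simp [commonPrefixLength]

end CommonPrefix

section Letters

variable {α : Type*}

/-- The generator `x.1` if `x.2` is true, and its inverse otherwise: the sign convention for letters
of words in `FreeGroup`. -/
def letter (x : α × Bool) : FreeGroup α := FreeGroup.mk [x]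

@[simp] lemma letter_true (i : α) : letter (i, true) = FreeGroup.of i := rfl

@[simp] lemma letter_false (i : α) : letter (i, false) = (FreeGroup.of i)⁻¹ := rfl

lemma mk_append (L M : List (α × Bool)) :
    FreeGroup.mk (L ++ M) = FreeGroup.mk L * FreeGroup.mk M :=
  FreeGroup.mul_mk.symm

lemma mk_cons (x : α × Bool) (L : List (α × Bool)) :
    FreeGroup.mk (x :: L) = letter x * FreeGroup.mk L :=
  mk_append [x] L

lemma inv_letter (x : α × Bool) : (letter x)⁻¹ = letter (x.1, !x.2) := by
  obtain ⟨i, e⟩ := x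
  cases e <;> simp

lemma letter_ne_one (x : α × Bool) : letter x ≠ 1 := by
  obtain ⟨i, e⟩ := x
  cases e <;> simp [FreeGroup.of_ne_one]

/-- Two letters which do not cancel when written next to each other. A word is reduced if and only
if all pairs of consecutive letters are of this kind. -/
def NonCancelling (x y : α × Bool) : Prop := x.1 = y.1 → x.2 = y.2

lemma NonCancelling.refl (x : α × Bool) : NonCancelling x x := fun _ => rfl

lemma NonCancelling.eq {x y : α × Bool} (h : NonCancelling x y) (hxy : x.1 = y.1) : x = y :=
  Prod.ext hxy (h hxy)

lemma isReduced_invRev {L : List (α × Bool)} (hL : FreeGroup.IsReduced L) :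
    FreeGroup.IsReduced (FreeGroup.invRev L) := by
  rw [FreeGroup.invRev, FreeGroup.IsReduced, List.isChain_reverse, List.isChain_map]
  exact hL.imp fun _ _ h heq => congrArg not (h heq.symm).symm

end Letters

section GromovProduct

variable {α : Type*} [DecidableEq α]

open FreeGroup (norm_inv_eq IsReduced)

lemma norm_mk_of_isReduced {L : List (α × Bool)} (hL : IsReduced L) :
    (FreeGroup.mk L).norm = L.length := by
  rw [FreeGroup.norm, FreeGroup.toWord_mk, hL.reduce_eq]

lemma norm_inv_mk_mul_mk_add_commonPrefixLength :
    ∀ L M : List (α × Bool), IsReduced L → IsReduced M →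
      ((FreeGroup.mk L)⁻¹ * FreeGroup.mk M).norm + 2 * commonPrefixLength L M =
        L.length + M.length
  | [], M, _, hM => by
    simp [commonPrefixLength, ← FreeGroup.one_eq_mk, norm_mk_of_isReduced hM]
  | x :: L, [], hL, _ => by
    rw [← FreeGroup.one_eq_mk, mul_one, norm_inv_eq, norm_mk_of_isReduced hL]
    simp [commonPrefixLength]
  | x :: L, y :: M, hL, hM => by
    by_cases h : x = y
    · subst h
      have ih := norm_inv_mk_mul_mk_add_commonPrefixLength L M hL.tail hM.tail
      have hcancel : (FreeGroup.mk (x :: L))⁻¹ * FreeGroup.mk (x :: M) =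
          (FreeGroup.mk L)⁻¹ * FreeGroup.mk M := by
        rw [mk_cons, mk_cons]; group
      rw [hcancel]
      simp only [commonPrefixLength, if_true, List.length_cons]
      omega
    · have hred : IsReduced (FreeGroup.invRev (x :: L) ++ y :: M) := by
        refine List.isChain_append.2 ⟨isReduced_invRev hL, hM, ?_⟩
        intro p hp q hq
        simp only [FreeGroup.invRev, List.map_cons, List.reverse_cons, List.getLast?_append,
          List.getLast?_singleton, Option.some_or, List.head?_cons, Option.mem_def,
          Option.some.injEq] at hp hq
        subst hp hq
        grind
      rw [FreeGroup.inv_mk, FreeGroup.mul_mk, norm_mk_of_isReduced hred]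
      simp [commonPrefixLength, h, FreeGroup.invRev_length]

/-- The Gromov product `(|g| + |h| - |g⁻¹h|) / 2` of two elements of a free group, with respect to
word length; it is the length of the common prefix of the two reduced words. -/
def gromovProduct (g h : FreeGroup α) : ℕ := commonPrefixLength g.toWord h.toWord

lemma norm_inv_mul_add_two_mul_gromovProduct (g h : FreeGroup α) :
    (g⁻¹ * h).norm + 2 * gromovProduct g h = g.norm + h.norm := by
  have := norm_inv_mk_mul_mk_add_commonPrefixLength g.toWord h.toWord
    FreeGroup.isReduced_toWord FreeGroup.isReduced_toWord
  rwa [FreeGroup.mk_toWord, FreeGroup.mk_toWord] at this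

lemma min_gromovProduct_le (g h k : FreeGroup α) :
    min (gromovProduct g h) (gromovProduct h k) ≤ gromovProduct g k :=
  min_commonPrefixLength_le _ _ _

lemma gromovProduct_comm (g h : FreeGroup α) : gromovProduct g h = gromovProduct h g := by
  have hgh := norm_inv_mul_add_two_mul_gromovProduct g h
  have hhg := norm_inv_mul_add_two_mul_gromovProduct h g
  have : (h⁻¹ * g).norm = (g⁻¹ * h).norm := by
    rw [← norm_inv_eq, mul_inv_rev, inv_inv]
  omega

lemma norm_mk_take_toWord (g : FreeGroup α) {n : ℕ} (hn : n ≤ g.norm) :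
    (FreeGroup.mk (g.toWord.take n)).norm = n ∧
      ((FreeGroup.mk (g.toWord.take n))⁻¹ * g).norm + n = g.norm := by
  have hred : IsReduced (g.toWord.take n ++ g.toWord.drop n) := by
    rw [List.take_append_drop]; exact FreeGroup.isReduced_toWord
  obtain ⟨htake, hdrop, -⟩ := List.isChain_append.1 hred
  have hdiv : (FreeGroup.mk (g.toWord.take n))⁻¹ * g = FreeGroup.mk (g.toWord.drop n) := by
    rw [inv_mul_eq_iff_eq_mul, ← mk_append, List.take_append_drop, FreeGroup.mk_toWord]
  rw [hdiv, norm_mk_of_isReduced htake, norm_mk_of_isReduced hdrop, List.length_take,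
    List.length_drop]
  unfold FreeGroup.norm at hn ⊢
  omega

lemma exists_common_prefix (g h : FreeGroup α) :
    ∃ p, p.norm = gromovProduct g h ∧ (p⁻¹ * g).norm + p.norm = g.norm ∧
      (p⁻¹ * h).norm + p.norm = h.norm := by
  obtain ⟨hg, hh⟩ := commonPrefixLength_le_length g.toWord h.toWord
  obtain ⟨hp, hpg⟩ := norm_mk_take_toWord g hg
  obtain ⟨-, hph⟩ := norm_mk_take_toWord h hh
  rw [← take_commonPrefixLength] at hph
  exact ⟨_, hp, by rwa [hp], by rwa [hp]⟩

lemma norm_lt_norm_mul_self {v : FreeGroup α} (hv : v ≠ 1) : v.norm < (v * v).norm := by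
  have hsq : (v * v).norm = (FreeGroup.reduce (List.replicate 2 v.toWord).flatten).length := by
    rw [FreeGroup.norm, FreeGroup.toWord_mul]; simp [List.replicate]
  have hdecomp := FreeGroup.reduceCyclically.conj_conjugator_reduceCyclically v.toWord
  have hcore : FreeGroup.reduceCyclically v.toWord ≠ [] := by
    intro h
    rw [h, List.append_nil] at hdecomp
    apply hv
    rw [← FreeGroup.mk_toWord (x := v), ← hdecomp, mk_append, ← FreeGroup.inv_mk, mul_inv_cancel]
  have hpos := List.length_pos_iff.2 hcore
  have hlen := congrArg List.length hdecomp
  rw [hsq, FreeGroup.reduceCyclically.reduce_flatten_replicate_succ FreeGroup.isReduced_toWord 1,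
    FreeGroup.norm]
  simp only [List.append_assoc, List.length_append, FreeGroup.invRev_length, List.replicate,
    List.flatten_cons, List.flatten_nil, List.append_nil] at hlen ⊢
  omega

/-- If both `uv` and `vu` cancel half of `v = pt`, then `u = t⁻¹wp⁻¹`, and conjugation by `t` turns
the pair `(uv, v)` into `(w, tp)`. -/
lemma exists_norm_conj_add_norm_conj_lt {u v : FreeGroup α} (hv : v ≠ 1)
    (huv : 2 * gromovProduct u⁻¹ v = v.norm) (hvu : 2 * gromovProduct v⁻¹ u = v.norm)
    (hle : v.norm ≤ u.norm) :
    ∃ t, (t * (u * v) * t⁻¹).norm + (t * v * t⁻¹).norm < u.norm + v.norm := by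
  obtain ⟨p, hp, hpu, hpv⟩ := exists_common_prefix u⁻¹ v
  have hv0 : v.norm ≠ 0 := mt FreeGroup.norm_eq_zero.1 hv
  set s := p⁻¹ * u⁻¹ with hs
  set t := p⁻¹ * v with ht
  rw [norm_inv_eq] at hpu
  have hvt := norm_inv_mul_add_two_mul_gromovProduct v⁻¹ t⁻¹
  have hus := norm_inv_mul_add_two_mul_gromovProduct u s⁻¹
  have hts := norm_inv_mul_add_two_mul_gromovProduct t⁻¹ s⁻¹
  rw [show (v⁻¹)⁻¹ * t⁻¹ = p by rw [ht]; group, norm_inv_eq, norm_inv_eq] at hvt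
  rw [show u⁻¹ * s⁻¹ = p by rw [hs]; group, norm_inv_eq] at hus
  rw [inv_inv, norm_inv_eq, norm_inv_eq] at hts
  have htv_u := min_gromovProduct_le t⁻¹ v⁻¹ u
  have htu_s := min_gromovProduct_le t⁻¹ u s⁻¹
  rw [gromovProduct_comm t⁻¹ v⁻¹] at htv_u
  refine ⟨t, ?_⟩
  rw [show t * (u * v) * t⁻¹ = t * s⁻¹ by rw [hs, ht]; group,
    show t * v * t⁻¹ = t * p by rw [ht]; group]
  have htp := FreeGroup.norm_mul_le t p
  omega

end GromovProduct

section NielsenReduced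

variable {α β : Type*} [DecidableEq β]

/-- The number of letters that cancel between the images of `x` and `y` in the image of `xy`. -/
def cancellation (φ : FreeGroup α →* FreeGroup β) (x y : α × Bool) : ℕ :=
  gromovProduct (φ (letter x))⁻¹ (φ (letter y))

lemma norm_mul_add_two_mul_gromovProduct (g h : FreeGroup β) :
    (g * h).norm + 2 * gromovProduct g⁻¹ h = g.norm + h.norm := by
  simpa only [inv_inv, FreeGroup.norm_inv_eq] using norm_inv_mul_add_two_mul_gromovProduct g⁻¹ h

/-- A homomorphism of free groups is Nielsen reduced if, in the image of a reduced word, the image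
of each letter is not used up by the cancellations with its two neighbours. -/
def IsNielsenReduced (φ : FreeGroup α →* FreeGroup β) : Prop :=
  ∀ ⦃x y z : α × Bool⦄, NonCancelling x y → NonCancelling y z →
    cancellation φ x y + cancellation φ y z < (φ (letter y)).norm

lemma IsNielsenReduced.gromovProduct_map_mk {φ : FreeGroup α →* FreeGroup β}
    (hφ : IsNielsenReduced φ) (L : List (α × Bool)) {y x : α × Bool}
    (hL : FreeGroup.IsReduced (L ++ [y])) (hyx : NonCancelling y x) :
    gromovProduct (φ (FreeGroup.mk (L ++ [y])))⁻¹ (φ (letter x)) = cancellation φ y x ∧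
      L.length + 1 + cancellation φ y x ≤ (φ (FreeGroup.mk (L ++ [y]))).norm := by
  induction L using List.reverseRecOn generalizing y x with
  | nil =>
    have hlt := hφ (NonCancelling.refl y) hyx
    refine ⟨rfl, ?_⟩
    rw [List.nil_append, List.length_nil]
    exact le_trans (by omega) hlt
  | append_singleton L z ih =>
    obtain ⟨hLz, -, hzy⟩ := List.isChain_append.1 hL
    have hzy : NonCancelling z y := hzy z (by simp) y (by simp)
    obtain ⟨hcancel, hlen⟩ := ih hLz hzy
    have hlt := hφ hzy hyx
    set v := φ (FreeGroup.mk (L ++ [z]))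
    have hw : φ (FreeGroup.mk (L ++ [z] ++ [y])) = v * φ (letter y) := by
      rw [mk_append, map_mul]; rfl
    rw [hw]
    have hvy := norm_mul_add_two_mul_gromovProduct v (φ (letter y))
    have hwy := norm_mul_add_two_mul_gromovProduct (v * φ (letter y)) (φ (letter y))⁻¹
    rw [mul_inv_cancel_right, FreeGroup.norm_inv_eq] at hwy
    have hle := min_gromovProduct_le (v * φ (letter y))⁻¹ (φ (letter y))⁻¹ (φ (letter x))
    have hge := min_gromovProduct_le (φ (letter y))⁻¹ (v * φ (letter y))⁻¹ (φ (letter x))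
    rw [gromovProduct_comm (φ (letter y))⁻¹ (v * φ (letter y))⁻¹] at hge
    change min _ (cancellation φ y x) ≤ _ at hle
    change _ ≤ cancellation φ y x at hge
    rw [List.length_append, List.length_singleton]
    omega

lemma IsNielsenReduced.norm_le_norm_map [DecidableEq α] {φ : FreeGroup α →* FreeGroup β}
    (hφ : IsNielsenReduced φ) (w : FreeGroup α) : w.norm ≤ (φ w).norm := by
  rcases List.eq_nil_or_concat' w.toWord with h | ⟨L, y, h⟩
  · simp [FreeGroup.norm, h]
  · have hred : FreeGroup.IsReduced (L ++ [y]) := h ▸ FreeGroup.isReduced_toWord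
    obtain ⟨-, hle⟩ := hφ.gromovProduct_map_mk L hred (NonCancelling.refl y)
    rw [← h, FreeGroup.mk_toWord] at hle
    rw [FreeGroup.norm, h, List.length_append, List.length_singleton]
    omega

end NielsenReduced

section SignFlip

variable {α : Type*}

/-- The automorphism inverting the generators `i` for which `s i` is false. -/
def signFlip (s : α → Bool) : MulAut (FreeGroup α) :=
  MonoidHom.toMulEquiv (FreeGroup.lift fun i => letter (i, s i))
    (FreeGroup.lift fun i => letter (i, s i))
    (by ext i; cases h : s i <;> simp [h])
    (by ext i; cases h : s i <;> simp [h])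

lemma signFlip_of (s : α → Bool) (i : α) : signFlip s (FreeGroup.of i) = letter (i, s i) := by
  simp [signFlip]

lemma signFlip_letter (s : α → Bool) (x : α × Bool) :
    signFlip s (letter x) = letter (x.1, x.2 == s x.1) := by
  obtain ⟨i, e⟩ := x
  cases e <;> simp [signFlip_of, inv_letter]

lemma signFlip_mul_self (s : α → Bool) : signFlip s * signFlip s = 1 :=
  mul_inv_cancel (signFlip s)

end SignFlip

section RankTwo

variable {i j : Fin 2}

lemma aut_ext (hij : i ≠ j) {φ ψ : MulAut F} (hi : φ (.of i) = ψ (.of i))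
    (hj : φ (.of j) = ψ (.of j)) : φ = ψ := by
  have : φ.toMonoidHom = ψ.toMonoidHom := by
    ext k
    obtain rfl | rfl : k = i ∨ k = j := by omega
    exacts [hi, hj]
  exact MulEquiv.toMonoidHom_injective this

/-- The automorphism exchanging the two generators. -/
def swapAut : MulAut F := FreeGroup.freeGroupCongr (Equiv.swap 0 1)

lemma swapAut_of (hij : i ≠ j) : swapAut (.of i) = .of j := by
  obtain ⟨rfl, rfl⟩ | ⟨rfl, rfl⟩ : i = 0 ∧ j = 1 ∨ i = 1 ∧ j = 0 := by omega
  all_goals rfl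

lemma swapAut_letter (x : Fin 2 × Bool) : swapAut (letter x) = letter (Equiv.swap 0 1 x.1, x.2) :=
  FreeGroup.map.mk

lemma swapAut_mul_self : swapAut * swapAut = 1 :=
  aut_ext zero_ne_one (by simp [swapAut_of zero_ne_one, swapAut_of one_ne_zero])
    (by simp [swapAut_of zero_ne_one, swapAut_of one_ne_zero])

/-- The automorphism `σ` or `τ`, according to whether `i` is `0` or `1`, or its inverse if `e` is
false. It multiplies the generator `i` on the right by the other generator or its inverse. -/
def transvection (e : Bool) (i : Fin 2) : MulAut F :=
  if e then (if i = 0 then σ else τ) else (if i = 0 then σ else τ)⁻¹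

lemma transvection_not_mul_self (e : Bool) (i : Fin 2) :
    transvection (!e) i * transvection e i = 1 := by
  cases e
  · exact mul_inv_cancel _
  · exact inv_mul_cancel _

lemma transvection_of_self (e : Bool) (hij : i ≠ j) :
    transvection e i (.of i) = .of i * letter (j, e) := by
  obtain ⟨rfl, rfl⟩ | ⟨rfl, rfl⟩ : i = 0 ∧ j = 1 ∨ i = 1 ∧ j = 0 := by omega
  all_goals cases e <;> simp [transvection, σ, τ, mkAut, ga, gb, MulAut.inv_def]

lemma transvection_of_ne (e : Bool) (hij : i ≠ j) : transvection e i (.of j) = .of j := by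
  obtain ⟨rfl, rfl⟩ | ⟨rfl, rfl⟩ : i = 0 ∧ j = 1 ∨ i = 1 ∧ j = 0 := by omega
  all_goals cases e <;> simp [transvection, σ, τ, mkAut, ga, gb, MulAut.inv_def]

lemma transvection_letter_ne (e d : Bool) (hij : i ≠ j) :
    transvection e i (letter (j, d)) = letter (j, d) := by
  cases d <;> simp [transvection_of_ne e hij]

lemma transvection_mul_signFlip (e : Bool) (hij : i ≠ j) (s : Fin 2 → Bool) :
    transvection e i * signFlip s = MulAut.conj (if s i then 1 else letter (j, !e)) *
      signFlip s * transvection (e == (s i == s j)) i := by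
  apply aut_ext hij <;> cases e <;> cases hi : s i <;> cases hj : s j <;>
    simp [signFlip_of, transvection_of_self _ hij, transvection_of_ne _ hij, hi, hj,
      mul_assoc]

lemma transvection_mul_swapAut (e : Bool) (hij : i ≠ j) :
    transvection e i * swapAut = swapAut * transvection e j := by
  apply aut_ext hij <;> cases e <;>
    simp [swapAut_of hij, swapAut_of hij.symm, transvection_of_self _ hij,
      transvection_of_self _ hij.symm, transvection_of_ne _ hij, transvection_of_ne _ hij.symm]

lemma mulAut_mul_conj {G : Type*} [Group G] (φ : MulAut G) (g : G) :
    φ * MulAut.conj g = MulAut.conj (φ g) * φ := by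
  ext; simp

lemma transvection_not_mul_transvection (e : Bool) (hij : i ≠ j) :
    transvection (!e) i * transvection e j =
      MulAut.conj (.of (if e then j else i)) * signFlip (fun k => k ≠ if e then j else i) *
        swapAut * transvection e i := by
  apply aut_ext hij <;> cases e <;>
    simp [swapAut_of hij, swapAut_of hij.symm, signFlip_of, transvection_of_self _ hij, hij,
      transvection_of_self _ hij.symm, transvection_of_ne _ hij, transvection_of_ne _ hij.symm,
      hij.symm, mul_assoc]

/-- The automorphisms which permute the generators up to inversion, followed by an inner
automorphism. (This submonoid is in fact a subgroup.) -/
def monomialAut : Submonoid (MulAut F) :=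
  Submonoid.closure ({swapAut} ∪ Set.range signFlip ∪ Set.range MulAut.conj)

lemma swapAut_mem_monomialAut : swapAut ∈ monomialAut :=
  Submonoid.subset_closure (.inl (.inl rfl))

lemma signFlip_mem_monomialAut (s : Fin 2 → Bool) : signFlip s ∈ monomialAut :=
  Submonoid.subset_closure (.inl (.inr ⟨s, rfl⟩))

lemma conj_mem_monomialAut (g : F) : MulAut.conj g ∈ monomialAut :=
  Submonoid.subset_closure (.inr ⟨g, rfl⟩)

lemma exists_mem_monomialAut_letter (hij : i ≠ j) (e d : Bool) :
    ∃ p ∈ monomialAut, p (.of 0) = letter (i, e) ∧ p (.of 1) = letter (j, d) := by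
  obtain ⟨rfl, rfl⟩ | ⟨rfl, rfl⟩ : i = 0 ∧ j = 1 ∨ i = 1 ∧ j = 0 := by omega
  · exact ⟨signFlip ![e, d], signFlip_mem_monomialAut _, signFlip_of _ _, signFlip_of _ _⟩
  · refine ⟨signFlip ![d, e] * swapAut,
      mul_mem (signFlip_mem_monomialAut _) swapAut_mem_monomialAut, ?_, ?_⟩
    · exact (congrArg _ (swapAut_of zero_ne_one)).trans (signFlip_of _ _)
    · exact (congrArg _ (swapAut_of one_ne_zero)).trans (signFlip_of _ _)

lemma exists_transvection_mul_eq {k : MulAut F} (hk : k ∈ monomialAut) (e : Bool) (i : Fin 2) :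
    ∃ k' ∈ monomialAut, ∃ e' i', transvection e i * k = k' * transvection e' i' := by
  induction hk using Submonoid.closure_induction generalizing e i with
  | mem k hk =>
    obtain ⟨j, hij⟩ := exists_ne i
    obtain (rfl | ⟨s, rfl⟩) | ⟨g, rfl⟩ := hk
    · exact ⟨_, swapAut_mem_monomialAut, e, j, transvection_mul_swapAut e hij.symm⟩
    · exact ⟨_, mul_mem (conj_mem_monomialAut _) (signFlip_mem_monomialAut s), _, _,
        transvection_mul_signFlip e hij.symm s⟩
    · exact ⟨_, conj_mem_monomialAut _, _, _, mulAut_mul_conj _ g⟩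
  | one => exact ⟨1, one_mem _, e, i, by rw [mul_one, one_mul]⟩
  | mul k₁ k₂ _ _ ih₁ ih₂ =>
    obtain ⟨k₁', hk₁', e₁, i₁, h₁⟩ := ih₁ e i
    obtain ⟨k₂', hk₂', e₂, i₂, h₂⟩ := ih₂ e₁ i₁
    exact ⟨k₁' * k₂', mul_mem hk₁' hk₂', e₂, i₂, by rw [← mul_assoc, h₁, mul_assoc, h₂, mul_assoc]⟩

/-- The composite of the transvections with indices in `l`, all of the same sign `e`: a chain of
type (C1) if `e` is true and of type (C2) otherwise. -/
def chain (e : Bool) (l : List (Fin 2)) : MulAut F := (l.map (transvection e)).prod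

@[simp] lemma chain_nil (e : Bool) : chain e [] = 1 := rfl

lemma chain_cons (e : Bool) (i : Fin 2) (l : List (Fin 2)) :
    chain e (i :: l) = transvection e i * chain e l := by
  simp [chain]

lemma chain_concat (e : Bool) (l : List (Fin 2)) (i : Fin 2) :
    chain e (l ++ [i]) = chain e l * transvection e i := by
  simp [chain]

lemma exists_transvection_mul_chain_eq (d : Bool) (i : Fin 2) (e : Bool) (l : List (Fin 2)) :
    ∃ k ∈ monomialAut, ∃ e' l', transvection d i * chain e l = k * chain e' l' := by
  obtain rfl | rfl : d = e ∨ d = !e := by cases d <;> cases e <;> simp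
  · exact ⟨1, one_mem _, d, i :: l, by rw [chain_cons, one_mul]⟩
  · cases l with
    | nil => exact ⟨1, one_mem _, !e, [i], by simp [chain_cons]⟩
    | cons j l =>
      rw [chain_cons, ← mul_assoc]
      obtain rfl | hij := eq_or_ne i j
      · exact ⟨1, one_mem _, e, l, by rw [transvection_not_mul_self]⟩
      · exact ⟨_, mul_mem (mul_mem (conj_mem_monomialAut _) (signFlip_mem_monomialAut _))
          swapAut_mem_monomialAut, e, i :: l,
          by rw [transvection_not_mul_transvection e hij, chain_cons, mul_assoc]⟩

end RankTwo

section NielsenTheorem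

lemma commute_letter {α : Type*} {x y : α × Bool} (h : x.1 = y.1) :
    Commute (letter x) (letter y) := by
  obtain ⟨i, e⟩ := x
  obtain ⟨j, d⟩ := y
  obtain rfl : i = j := h
  cases e <;> cases d <;> simp

lemma mulEquiv_letter_ne_one {α β : Type*} (φ : FreeGroup α ≃* FreeGroup β) (x : α × Bool) :
    φ (letter x) ≠ 1 :=
  (MulEquiv.map_ne_one_iff φ).2 (letter_ne_one x)

lemma norm_map_letter_not {α β : Type*} [DecidableEq β] (φ : FreeGroup α →* FreeGroup β) (i : α)
    (e : Bool) : (φ (letter (i, !e))).norm = (φ (letter (i, e))).norm := by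
  rw [← FreeGroup.norm_inv_eq, ← map_inv, inv_letter, Bool.not_not]

lemma cancellation_not_not {α β : Type*} [DecidableEq β] (φ : FreeGroup α →* FreeGroup β)
    (x y : α × Bool) :
    cancellation φ (y.1, !y.2) (x.1, !x.2) = cancellation φ x y := by
  rw [cancellation, cancellation, ← inv_letter, ← inv_letter, map_inv, map_inv, inv_inv,
    gromovProduct_comm]

lemma two_mul_cancellation_self_lt {α β : Type*} [DecidableEq β]
    {φ : FreeGroup α →* FreeGroup β} {x : α × Bool} (hx : φ (letter x) ≠ 1) :
    2 * cancellation φ x x < (φ (letter x)).norm := by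
  have hmul := norm_mul_add_two_mul_gromovProduct (φ (letter x)) (φ (letter x))
  have hlt := norm_lt_norm_mul_self hx
  rw [cancellation]
  omega

lemma exists_letter_of_norm_le_one {α : Type*} [DecidableEq α] {w : FreeGroup α} (hw : w ≠ 1)
    (h : w.norm ≤ 1) : ∃ x, w = letter x := by
  have hlen : w.toWord.length = 1 :=
    le_antisymm h (Nat.one_le_iff_ne_zero.2 (mt FreeGroup.norm_eq_zero.1 hw))
  obtain ⟨x, hx⟩ := List.length_eq_one_iff.1 hlen
  exact ⟨x, by rw [← FreeGroup.mk_toWord (x := w), hx, letter]⟩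

/-- The sum of the norms of the images of the generators. -/
def basisNorm {α β : Type*} [Fintype α] [DecidableEq β] (φ : FreeGroup α →* FreeGroup β) : ℕ :=
  ∑ i, (φ (.of i)).norm

lemma basisNorm_eq (φ : F →* F) {x y : Fin 2 × Bool} (hxy : x.1 ≠ y.1) :
    basisNorm φ = (φ (letter x)).norm + (φ (letter y)).norm := by
  have hof (x : Fin 2 × Bool) : (φ (letter x)).norm = (φ (.of x.1)).norm := by
    obtain ⟨i, e⟩ := x
    cases e
    exacts [norm_map_letter_not φ i true, rfl]
  rw [hof, hof, basisNorm, Fin.sum_univ_two]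
  obtain ⟨hx, hy⟩ | ⟨hx, hy⟩ : x.1 = 0 ∧ y.1 = 1 ∨ x.1 = 1 ∧ y.1 = 0 := by omega
  · rw [hx, hy]
  · rw [hx, hy, add_comm]

/-- The automorphisms generated by `σ` and the monomial ones; by Nielsen's theorem these are all
automorphisms. -/
def nielsenAut : Submonoid (MulAut F) := Submonoid.closure (insert σ monomialAut)

/-- An automorphism which is shortest, in the sense of `basisNorm`, in its coset modulo
`nielsenAut`. -/
def IsNielsenMinimal (φ : MulAut F) : Prop :=
  ∀ k ∈ nielsenAut, basisNorm φ.toMonoidHom ≤ basisNorm (φ * k).toMonoidHom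

lemma exists_mem_nielsenAut_isNielsenMinimal (φ : MulAut F) :
    ∃ k ∈ nielsenAut, IsNielsenMinimal (φ * k) := by
  obtain ⟨k, hk, hmin⟩ := exists_minimalFor_of_wellFoundedLT (· ∈ nielsenAut)
    (fun k => basisNorm (φ * k).toMonoidHom) ⟨1, one_mem _⟩
  refine ⟨k, hk, fun k' hk' => ?_⟩
  rw [mul_assoc]
  exact (le_total _ _).elim id (hmin (mul_mem hk hk'))

namespace IsNielsenMinimal

variable {φ : MulAut F} {x y z : Fin 2 × Bool}

lemma norm_add_norm_le (hφ : IsNielsenMinimal φ) (hxy : x.1 ≠ y.1) (q : F) :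
    (φ (letter x)).norm + (φ (letter y)).norm ≤
      (q * (φ (letter x) * φ (letter y)) * q⁻¹).norm + (q * φ (letter y) * q⁻¹).norm := by
  obtain ⟨p, hp, hx, hy⟩ := exists_mem_monomialAut_letter hxy x.2 y.2
  have hσ : σ ∈ nielsenAut := Submonoid.subset_closure (.inl rfl)
  have hmono {k} (hk : k ∈ monomialAut) : k ∈ nielsenAut := Submonoid.subset_closure (.inr hk)
  have hle := hφ (MulAut.conj (φ⁻¹ q) * (p * σ))
    (mul_mem (hmono (conj_mem_monomialAut _)) (mul_mem (hmono hp) hσ))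
  rw [basisNorm_eq φ.toMonoidHom hxy,
    basisNorm_eq _ (x := (0, true)) (y := (1, true)) zero_ne_one] at hle
  have h0 : σ (.of 0) = .of 0 * .of 1 := transvection_of_self true zero_ne_one
  have h1 : σ (.of 1) = .of 1 := transvection_of_ne true zero_ne_one
  simpa [h0, h1, hx, hy] using hle

lemma two_mul_cancellation_le_right (hφ : IsNielsenMinimal φ) (hxy : NonCancelling x y) :
    2 * cancellation φ.toMonoidHom x y ≤ (φ (letter y)).norm := by
  by_cases h : x.1 = y.1
  · obtain rfl := hxy.eq h
    exact (two_mul_cancellation_self_lt (mulEquiv_letter_ne_one φ x)).le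
  · have hmul := norm_mul_add_two_mul_gromovProduct (φ (letter x)) (φ (letter y))
    have hle := hφ.norm_add_norm_le h 1
    simp only [one_mul, inv_one, mul_one] at hle
    change 2 * gromovProduct (φ (letter x))⁻¹ (φ (letter y)) ≤ _
    omega

lemma two_mul_cancellation_le_left (hφ : IsNielsenMinimal φ) (hxy : NonCancelling x y) :
    2 * cancellation φ.toMonoidHom x y ≤ (φ (letter x)).norm := by
  have := hφ.two_mul_cancellation_le_right (x := (y.1, !y.2)) (y := (x.1, !x.2))
    (fun h => by rw [hxy h.symm])
  rwa [cancellation_not_not, ← inv_letter, map_inv, FreeGroup.norm_inv_eq] at this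

lemma isNielsenReduced (hφ : IsNielsenMinimal φ) : IsNielsenReduced φ.toMonoidHom := by
  intro x y z hxy hyz
  by_contra! hge
  change (φ (letter y)).norm ≤ _ at hge
  have hself : 2 * cancellation φ.toMonoidHom y y < (φ (letter y)).norm :=
    two_mul_cancellation_self_lt (mulEquiv_letter_ne_one φ y)
  have hx := hφ.two_mul_cancellation_le_right hxy
  have hz := hφ.two_mul_cancellation_le_left hyz
  have hx_half : 2 * cancellation φ.toMonoidHom x y = (φ (letter y)).norm := by omega
  have hz_half : 2 * cancellation φ.toMonoidHom y z = (φ (letter y)).norm := by omega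
  have hxy1 : x.1 ≠ y.1 := fun h => by
    obtain rfl := hxy.eq h
    omega
  have hyz1 : y.1 ≠ z.1 := fun h => by
    obtain rfl := hyz.eq h
    omega
  have hxz1 : x.1 = z.1 := by omega
  by_cases hxz2 : x.2 = z.2
  · obtain rfl : x = z := Prod.ext hxz1 hxz2
    obtain ⟨t, ht⟩ := exists_norm_conj_add_norm_conj_lt (mulEquiv_letter_ne_one φ y)
      hx_half hz_half (hx_half ▸ hφ.two_mul_cancellation_le_left hxy)
    exact absurd (hφ.norm_add_norm_le hxy1 t) (not_le.2 ht)
  · have hzx : (letter x)⁻¹ = letter z := by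
      rw [inv_letter, hxz1, Bool.eq_not_iff.2 hxz2, Bool.not_not]
    have hmin := min_gromovProduct_le (φ (letter y))⁻¹ (φ (letter z)) (φ (letter y))
    have hx_eq : gromovProduct (φ (letter z)) (φ (letter y)) = cancellation φ.toMonoidHom x y := by
      rw [← hzx, map_inv]; rfl
    change min (cancellation φ.toMonoidHom y z) _ ≤ cancellation φ.toMonoidHom y y at hmin
    omega

/-- By reducedness, `φ⁻¹` maps the generators to letters. -/
lemma inv_mem_monomialAut (hφ : IsNielsenMinimal φ) : φ⁻¹ ∈ monomialAut := by
  have hletter (i : Fin 2) : ∃ x, φ⁻¹ (.of i) = letter x := by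
    refine exists_letter_of_norm_le_one (mulEquiv_letter_ne_one φ⁻¹ (i, true)) ?_
    refine (hφ.isNielsenReduced.norm_le_norm_map _).trans_eq ?_
    exact (congrArg _ (MulAut.apply_inv_self _ φ _)).trans (FreeGroup.norm_of i)
  obtain ⟨x, hx⟩ := hletter 0
  obtain ⟨y, hy⟩ := hletter 1
  have hxy : x.1 ≠ y.1 := fun h => by
    have hcomm : Commute (φ⁻¹ (.of 0)) (φ⁻¹ (.of 1)) := hx ▸ hy ▸ commute_letter h
    exact absurd (hcomm.of_map φ⁻¹.injective).eq
      (by decide : (.of 0 * .of 1 : F) ≠ .of 1 * .of 0)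
  obtain ⟨p, hp, hp0, hp1⟩ := exists_mem_monomialAut_letter hxy x.2 y.2
  rwa [aut_ext zero_ne_one (hx.trans hp0.symm) (hy.trans hp1.symm)]

end IsNielsenMinimal

theorem nielsenAut_eq_top : nielsenAut = ⊤ := by
  refine eq_top_iff.2 fun φ _ => ?_
  obtain ⟨k, hk, hmin⟩ := exists_mem_nielsenAut_isNielsenMinimal φ⁻¹
  have hp : (φ⁻¹ * k)⁻¹ ∈ nielsenAut := Submonoid.subset_closure (.inr hmin.inv_mem_monomialAut)
  simpa using mul_mem hk hp

lemma exists_eq_mul_chain (φ : MulAut F) :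
    ∃ k ∈ monomialAut, ∃ e l, φ = k * chain e l := by
  have hφ : φ ∈ nielsenAut := nielsenAut_eq_top ▸ Submonoid.mem_top φ
  induction hφ using Submonoid.closure_induction_left with
  | one => exact ⟨1, one_mem _, true, [], (mul_one 1).symm⟩
  | mul_left x hx φ _ ih =>
    obtain ⟨k, hk, e, l, rfl⟩ := ih
    obtain rfl | hx := hx
    · obtain ⟨k₁, hk₁, d, i, h₁⟩ := exists_transvection_mul_eq hk true 0
      obtain ⟨k₂, hk₂, e', l', h₂⟩ := exists_transvection_mul_chain_eq d i e l
      exact ⟨k₁ * k₂, mul_mem hk₁ hk₂, e', l', by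
        rw [mul_assoc, ← h₂, ← mul_assoc, ← mul_assoc, ← h₁]; rfl⟩
    · exact ⟨x * k, mul_mem hx hk, e, l, (mul_assoc _ _ _).symm⟩

end NielsenTheorem

section SignCoherence

section ConjMem

variable {G H : Type*} [Group G] [Group H] {S : Submonoid G} {T : Submonoid H}

/-- Some conjugate of `w` lies in the submonoid `S`. -/
def ConjMem (S : Submonoid G) (w : G) : Prop := ∃ g, g * w * g⁻¹ ∈ S

lemma ConjMem.map {w : G} (hw : ConjMem S w) {f : G →* H} (hf : S ≤ T.comap f) :
    ConjMem T (f w) := by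
  obtain ⟨g, hg⟩ := hw
  exact ⟨f g, by simpa only [Submonoid.mem_comap, map_mul, map_inv] using hf hg⟩

lemma ConjMem.of_isConj {v w : G} (hw : ConjMem S w) (h : IsConj w v) : ConjMem S v := by
  obtain ⟨c, rfl⟩ := isConj_iff.1 h
  obtain ⟨g, hg⟩ := hw
  refine ⟨g * c⁻¹, ?_⟩
  convert hg using 1
  group

lemma ConjMem.inv {S' : Submonoid G} {w : G} (hw : ConjMem S w) (hS : ∀ g ∈ S, g⁻¹ ∈ S') :
    ConjMem S' w⁻¹ := by
  obtain ⟨g, hg⟩ := hw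
  refine ⟨g, ?_⟩
  rw [← conj_inv]
  exact hS _ hg

lemma isConj_mulAut_conj (g w : G) : IsConj (MulAut.conj g w) w :=
  (isConj_iff.2 ⟨g, rfl⟩ : IsConj w _).symm

end ConjMem

variable {α : Type*}

/-- The elements which are products of generators `i` with `s i` true and of inverses of generators
with `s i` false. -/
def signCone (s : α → Bool) : Submonoid (FreeGroup α) :=
  Submonoid.closure (Set.range fun i => letter (i, s i))

lemma letter_mem_signCone (s : α → Bool) (i : α) : letter (i, s i) ∈ signCone s :=
  Submonoid.subset_closure ⟨i, rfl⟩

lemma signCone_le_comap {H : Type*} [Group H] {s : α → Bool} {T : Submonoid H}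
    {f : FreeGroup α →* H} (hf : ∀ i, f (letter (i, s i)) ∈ T) : signCone s ≤ T.comap f := by
  rw [signCone, Submonoid.closure_le]
  rintro _ ⟨i, rfl⟩
  exact hf i

lemma inv_mem_signCone {s : α → Bool} {g : FreeGroup α} (hg : g ∈ signCone s) :
    g⁻¹ ∈ signCone fun i => !s i := by
  induction hg using Submonoid.closure_induction with
  | mem _ hx =>
    obtain ⟨i, rfl⟩ := hx
    rw [inv_letter]
    exact letter_mem_signCone (fun i => !s i) i
  | one => rw [inv_one]; exact one_mem _
  | mul _ _ _ _ hx hy => rw [mul_inv_rev]; exact mul_mem hy hx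

/-- Some conjugate of `w` is a word in which no generator occurs with both signs. -/
def IsSignCoherent (w : FreeGroup α) : Prop := ∃ s, ConjMem (signCone s) w

namespace IsSignCoherent

lemma of_isConj {v w : FreeGroup α} (hw : IsSignCoherent w) (h : IsConj w v) :
    IsSignCoherent v :=
  hw.imp fun _ hs => hs.of_isConj h

lemma inv {w : FreeGroup α} (hw : IsSignCoherent w) : IsSignCoherent w⁻¹ :=
  hw.elim fun s hs => ⟨fun i => !s i, hs.inv fun _ => inv_mem_signCone⟩

lemma of_isConj_zpow {w : FreeGroup α} {i : α} {k : ℤ} (h : IsConj w (.of i ^ k)) :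
    IsSignCoherent w := by
  have hpow (s : Bool) (n : ℕ) : IsSignCoherent (letter (i, s) ^ n) :=
    ⟨fun _ => s, 1, by
      simpa only [one_mul, inv_one, mul_one] using pow_mem (letter_mem_signCone _ i) n⟩
  refine of_isConj ?_ h.symm
  obtain ⟨n, rfl | rfl⟩ := k.eq_nat_or_neg
  · simpa only [zpow_natCast, letter_true] using hpow true n
  · simpa only [zpow_neg, zpow_natCast, letter_false, inv_pow] using hpow false n

lemma map_signFlip {w : FreeGroup α} (hw : IsSignCoherent w) (t : α → Bool) :
    IsSignCoherent (signFlip t w) := by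
  obtain ⟨s, hs⟩ := hw
  refine ⟨fun i => s i == t i, hs.map (f := (signFlip t).toMonoidHom) (signCone_le_comap ?_)⟩
  intro i
  exact (signFlip_letter t _).symm ▸ letter_mem_signCone (fun i => s i == t i) i

lemma map_swapAut {w : F} (hw : IsSignCoherent w) : IsSignCoherent (swapAut w) := by
  obtain ⟨s, hs⟩ := hw
  refine ⟨fun i => s (Equiv.swap 0 1 i),
    hs.map (f := swapAut.toMonoidHom) (signCone_le_comap fun i => ?_)⟩
  have := letter_mem_signCone (fun i => s (Equiv.swap 0 1 i)) (Equiv.swap 0 1 i)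
  rw [Equiv.swap_apply_self] at this
  exact (swapAut_letter _).symm ▸ this

lemma of_mem_monomialAut {k : MulAut F} (hk : k ∈ monomialAut) {w : F}
    (hw : IsSignCoherent (k w)) : IsSignCoherent w := by
  induction hk using Submonoid.closure_induction generalizing w with
  | mem k hk =>
    obtain (rfl | ⟨s, rfl⟩) | ⟨g, rfl⟩ := hk
    · simpa only [← MulAut.mul_apply, swapAut_mul_self, MulAut.one_apply] using hw.map_swapAut
    · simpa only [← MulAut.mul_apply, signFlip_mul_self, MulAut.one_apply] using hw.map_signFlip s
    · exact hw.of_isConj (isConj_mulAut_conj g w)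
  | one => exact hw
  | mul _ _ _ _ ih₁ ih₂ => exact ih₂ (ih₁ hw)

end IsSignCoherent

lemma isPositive_iff {w : F} : IsPositive w ↔ w ∈ signCone fun _ => true := by
  have : Set.range (fun i : Fin 2 => letter (i, true)) = {ga, gb} := by
    ext; simp [ga, gb, eq_comm]
  rw [IsPositive, signCone, this]

lemma isW1_signFlip (s : Fin 2 → Bool) : IsW1 (signFlip s) := by
  constructor
  · rw [ga, signFlip_of]
    cases s 0 <;> simp
  · rw [gb, signFlip_of]
    cases s 1 <;> simp

lemma IsSignCoherent.exists_isW1 {w : F} (hw : IsSignCoherent w) :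
    ∃ β, IsW1 β ∧ ∃ g, IsPositive (g * β w * g⁻¹) := by
  obtain ⟨s, hs⟩ := hw
  refine ⟨signFlip s, isW1_signFlip s, ?_⟩
  obtain ⟨g, hg⟩ := hs.map (T := signCone fun _ => true) (f := (signFlip s).toMonoidHom)
    (signCone_le_comap fun i => by
      change signFlip s _ ∈ _
      rw [signFlip_letter, beq_self_eq_true]
      exact letter_mem_signCone _ i)
  exact ⟨g, isPositive_iff.2 hg⟩

lemma signCone_le_comap_transvection_false {s : Fin 2 → Bool} (hs : s 0 ≠ s 1) (i : Fin 2) :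
    signCone s ≤ (signCone s).comap (transvection false i).toMonoidHom := by
  refine signCone_le_comap fun k => ?_
  change transvection false i _ ∈ _
  have hk := letter_mem_signCone s k
  obtain rfl | hki := eq_or_ne k i
  · obtain ⟨j, hjk⟩ := exists_ne k
    have hj := letter_mem_signCone s j
    obtain ⟨hsk, hsj⟩ | ⟨hsk, hsj⟩ : s k = true ∧ s j = false ∨ s k = false ∧ s j = true := by
      grind
    · rw [hsk] at hk ⊢
      rw [hsj] at hj
      rw [letter_true, transvection_of_self _ hjk.symm]
      exact mul_mem hk hj
    · rw [hsk] at hk ⊢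
      rw [hsj] at hj
      rw [letter_false, map_inv, transvection_of_self _ hjk.symm, mul_inv_rev, inv_letter]
      exact mul_mem hj hk
  · rwa [transvection_letter_ne _ _ hki.symm]

end SignCoherence

section CyclicLength

variable {α : Type*}

lemma isConj_mk_of_isRotated {L M : List (α × Bool)} (h : L ~r M) :
    IsConj (FreeGroup.mk L) (FreeGroup.mk M) := by
  obtain ⟨n, rfl⟩ := h
  induction n with
  | zero => rw [List.rotate_zero]
  | succ n ih =>
    refine ih.trans ?_
    rw [← List.rotate_rotate]
    cases L.rotate n with
    | nil => rfl
    | cons x M =>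
      rw [List.rotate_cons_succ, List.rotate_zero, mk_append, mk_cons]
      exact isConj_iff.2 ⟨(letter x)⁻¹, by rw [inv_mul_cancel_left, inv_inv]; rfl⟩

lemma isCyclicallyReduced_of_chain {L : List (α × Bool)}
    (hL : Cycle.Chain NonCancelling (L : Cycle (α × Bool))) : FreeGroup.IsCyclicallyReduced L := by
  cases L with
  | nil => exact FreeGroup.IsCyclicallyReduced.nil
  | cons x L =>
    rw [Cycle.chain_coe_cons, ← List.cons_append, List.isChain_append] at hL
    obtain ⟨hred, -, hlast⟩ := hL
    exact ⟨hred, fun a ha b hb => by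
      obtain rfl : x = b := by simpa using hb
      exact hlast a ha x rfl⟩

variable [DecidableEq α]

lemma norm_conj_pow_le (g w : FreeGroup α) (n : ℕ) :
    ((g * w * g⁻¹) ^ n).norm ≤ n * w.norm + 2 * g.norm := by
  have hpow : (w ^ n).norm ≤ n * w.norm := by
    induction n with
    | zero => simp
    | succ n ih =>
      rw [pow_succ, Nat.add_mul, Nat.one_mul]
      exact (FreeGroup.norm_mul_le _ _).trans (Nat.add_le_add_right ih _)
  have hconj := FreeGroup.norm_mul_le (g * w ^ n) g⁻¹
  have hmul := FreeGroup.norm_mul_le g (w ^ n)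
  rw [FreeGroup.norm_inv_eq] at hconj
  rw [conj_pow]
  omega

/-- Conjugation changes the norms of powers by a bounded amount, while those of `mk L` grow with
slope `L.length`. -/
lemma length_le_norm_of_isConj {L : List (α × Bool)} (hL : FreeGroup.IsCyclicallyReduced L)
    {w : FreeGroup α} (h : IsConj w (FreeGroup.mk L)) : L.length ≤ w.norm := by
  obtain ⟨g, hg⟩ := isConj_iff.1 h
  have hle (n : ℕ) : n * L.length ≤ n * w.norm + 2 * g.norm := by
    have hnorm : (FreeGroup.mk L ^ n).norm = n * L.length := by
      rw [FreeGroup.pow_mk, norm_mk_of_isReduced (hL.flatten_replicate n).isReduced]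
      simp
    rw [← hnorm, ← hg]
    exact norm_conj_pow_le g w n
  by_contra! hlt
  nlinarith [hle (2 * g.norm + 1)]

lemma cyclen_le (w g : F) : cyclen w ≤ (g * w * g⁻¹).norm :=
  Nat.sInf_le ⟨g, rfl⟩

lemma exists_norm_eq_cyclen (w : F) : ∃ g, (g * w * g⁻¹).norm = cyclen w :=
  Nat.sInf_mem (s := {n | ∃ g, len (g * w * g⁻¹) = n}) ⟨_, 1, rfl⟩

lemma length_le_cyclen {L : List (Fin 2 × Bool)} (hL : FreeGroup.IsCyclicallyReduced L) {w : F}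
    (h : IsConj w (FreeGroup.mk L)) : L.length ≤ cyclen w := by
  obtain ⟨g, hg⟩ := exists_norm_eq_cyclen w
  rw [← hg]
  exact length_le_norm_of_isConj hL ((isConj_iff.2 ⟨g, rfl⟩ : IsConj w _).symm.trans h)

lemma cyclen_inv_le (w : F) : cyclen w⁻¹ ≤ cyclen w := by
  obtain ⟨g, hg⟩ := exists_norm_eq_cyclen w
  rw [← hg, ← FreeGroup.norm_inv_eq, conj_inv]
  exact cyclen_le _ g

lemma norm_map_le_of_norm_map_letter_le {β : Type*} [DecidableEq β]
    {φ : FreeGroup α →* FreeGroup β} (hφ : ∀ x, (φ (letter x)).norm ≤ 1) (w : FreeGroup α) :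
    (φ w).norm ≤ w.norm := by
  suffices h : ∀ L : List (α × Bool), (φ (FreeGroup.mk L)).norm ≤ L.length by
    have hw := h w.toWord
    rwa [FreeGroup.mk_toWord] at hw
  intro L
  induction L with
  | nil => simp [← FreeGroup.one_eq_mk]
  | cons x L ih =>
    rw [mk_cons, map_mul, List.length_cons, add_comm]
    exact (FreeGroup.norm_mul_le _ _).trans (Nat.add_le_add (hφ x) ih)

lemma norm_letter (x : α × Bool) : (letter x).norm = 1 :=
  norm_mk_of_isReduced (List.isChain_singleton x)

lemma cyclen_signFlip_le (s : Fin 2 → Bool) (w : F) : cyclen (signFlip s w) ≤ cyclen w := by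
  obtain ⟨g, hg⟩ := exists_norm_eq_cyclen w
  rw [← hg]
  refine (cyclen_le _ (signFlip s g)).trans ?_
  rw [← map_inv, ← map_mul, ← map_mul]
  refine norm_map_le_of_norm_map_letter_le (φ := (signFlip s).toMonoidHom) (fun x => ?_) _
  exact ((congrArg _ (signFlip_letter s x)).trans (norm_letter _)).le

end CyclicLength

section PullBack

section ListChain

variable {α : Type*} {R : α → α → Prop}

lemma getLastD_append (a : α) (l₁ l₂ : List α) :
    (l₁ ++ l₂).getLastD a = l₂.getLastD (l₁.getLastD a) := by
  induction l₁ generalizing a with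
  | nil => rfl
  | cons b l₁ ih => rw [List.cons_append, List.getLastD_cons, ih, List.getLastD_cons]

lemma isChain_cons_append {a : α} {l₁ l₂ : List α} (h₁ : List.IsChain R (a :: l₁))
    (h₂ : List.IsChain R (l₁.getLastD a :: l₂)) : List.IsChain R (a :: (l₁ ++ l₂)) := by
  induction l₁ generalizing a with
  | nil => exact h₂
  | cons b l₁ ih =>
    rw [List.getLastD_cons] at h₂
    rw [List.isChain_cons_cons] at h₁
    exact List.isChain_cons_cons.2 ⟨h₁.1, ih h₁.2 h₂⟩

lemma cycle_chain_of_getLastD_eq {a : α} {l : List α} (h : List.IsChain R (a :: l))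
    (hl : l.getLastD a = a) : Cycle.Chain R (l : Cycle α) := by
  obtain rfl | ⟨l, b, rfl⟩ := l.eq_nil_or_concat
  · exact Cycle.Chain.nil R
  · rw [List.concat_eq_append, List.getLastD_concat] at hl
    rw [List.concat_eq_append, hl] at h ⊢
    rwa [← Cycle.coe_cons_eq_coe_append, Cycle.chain_coe_cons]

end ListChain

/-- The letter `r` may follow the letter `q`: they do not cancel, and they are not inverses of
distinct generators. -/
def Admissible (q r : Fin 2 × Bool) : Prop :=
  NonCancelling q r ∧ (q.1 ≠ r.1 → q.2 = false → r.2 = true)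

instance : DecidableRel Admissible := fun q r =>
  inferInstanceAs (Decidable ((q.1 = r.1 → q.2 = r.2) ∧ (q.1 ≠ r.1 → q.2 = false → r.2 = true)))

/-- The number of inverses of generators in a word. -/
def negCount (L : List (Fin 2 × Bool)) : ℕ := L.countP (!·.2)

/-- The element `u` is represented, up to conjugation, by a cyclic word in which all consecutive
letters are admissible and which has `n` inverse letters. -/
def HasAdmissibleForm (u : F) (n : ℕ) : Prop :=
  ∃ L : List (Fin 2 × Bool),
    Cycle.Chain Admissible (L : Cycle _) ∧ IsConj u (FreeGroup.mk L) ∧ negCount L = n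

lemma HasAdmissibleForm.le_cyclen {u : F} {n : ℕ} (h : HasAdmissibleForm u n) : n ≤ cyclen u := by
  obtain ⟨L, hL, hu, rfl⟩ := h
  exact List.countP_le_length.trans
    (length_le_cyclen (isCyclicallyReduced_of_chain (hL.imp fun _ _ => And.left)) hu)

lemma exists_mk_eq_of_mem_signCone {α : Type*} {s : α → Bool} {w : FreeGroup α}
    (hw : w ∈ signCone s) : ∃ L, FreeGroup.mk L = w ∧ ∀ x ∈ L, x.2 = s x.1 := by
  induction hw using Submonoid.closure_induction with
  | mem _ hx =>
    obtain ⟨i, rfl⟩ := hx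
    exact ⟨[(i, s i)], rfl, by simp⟩
  | one => exact ⟨[], rfl, by simp⟩
  | mul _ _ _ _ ih₁ ih₂ =>
    obtain ⟨L₁, rfl, h₁⟩ := ih₁
    obtain ⟨L₂, rfl, h₂⟩ := ih₂
    exact ⟨L₁ ++ L₂, mk_append _ _, fun x hx => (List.mem_append.1 hx).elim (h₁ x) (h₂ x)⟩

lemma ConjMem.hasAdmissibleForm {w : F} (hw : ConjMem (signCone fun _ => true) w) :
    HasAdmissibleForm w 0 := by
  obtain ⟨g, hg⟩ := hw
  obtain ⟨L, hL, hpos⟩ := exists_mk_eq_of_mem_signCone hg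
  refine ⟨L, Cycle.chain_of_pairwise fun x hx y hy => ?_, isConj_iff.2 ⟨g, hL.symm⟩, ?_⟩
  · exact ⟨fun _ => (hpos x hx).trans (hpos y hy).symm, fun _ _ => hpos y hy⟩
  · exact List.countP_eq_zero.2 fun x hx => by simp [hpos x hx]

variable {i j : Fin 2}

/-- The letters contributed by `r`, when it follows `q`, to the reduced form of the inverse image of
a word under `transvection true i`, where `j` is the other generator. As `i * j` pulls back to `i`
and `i` itself to `i * j⁻¹`, the factor `j⁻¹` after a letter `i` is held back until the next letter
is known. -/
def pullLetter (i j : Fin 2) (q r : Fin 2 × Bool) : List (Fin 2 × Bool) :=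
  if q = (i, true) then
    if r = (i, true) then [(j, false), r] else if r = (j, true) then [] else [r, r]
  else if r = (i, false) then [(j, true), r] else [r]

/-- The concatenation of the contributions of the letters of a word preceded by `q`. -/
def pullWord (i j : Fin 2) (q : Fin 2 × Bool) : List (Fin 2 × Bool) → List (Fin 2 × Bool)
  | [] => []
  | r :: L => pullLetter i j q r ++ pullWord i j r L

/-- The image under `transvection true i` of the inverse of the factor held back after `q`. -/
def heldBack (i j : Fin 2) (q : Fin 2 × Bool) : F := if q = (i, true) then .of j else 1

lemma transvection_mk_pullLetter (hij : i ≠ j) {q r : Fin 2 × Bool} (h : Admissible q r) :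
    transvection true i (FreeGroup.mk (pullLetter i j q r)) =
      (heldBack i j q)⁻¹ * letter r * heldBack i j r := by
  have hself := transvection_of_self true hij
  have hne := transvection_of_ne true hij
  obtain ⟨k, d⟩ := r
  obtain rfl | rfl : i = k ∨ j = k := by omega
  all_goals by_cases hq : q = (i, true) <;> cases d <;>
    simp_all [pullLetter, heldBack, mk_cons, Admissible, NonCancelling, hij.symm,
      ← FreeGroup.one_eq_mk, mul_assoc]

lemma transvection_mk_pullWord (hij : i ≠ j) {q : Fin 2 × Bool} {L : List (Fin 2 × Bool)}
    (h : List.IsChain Admissible (q :: L)) :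
    transvection true i (FreeGroup.mk (pullWord i j q L)) =
      (heldBack i j q)⁻¹ * FreeGroup.mk L * heldBack i j (L.getLastD q) := by
  induction L generalizing q with
  | nil => simp [pullWord, ← FreeGroup.one_eq_mk]
  | cons r L ih =>
    rw [List.isChain_cons_cons] at h
    rw [pullWord, mk_append, map_mul, transvection_mk_pullLetter hij h.1, ih h.2, mk_cons,
      List.getLastD_cons]
    group

/-- The possible last letters `q'` of the pulled back word, given the last letter `q` read. -/
def CanEndPull (i j : Fin 2) (q q' : Fin 2 × Bool) : Prop :=
  q' = q ∨ q = (j, true) ∧ q' = (i, true)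

instance (i j : Fin 2) : DecidableRel (CanEndPull i j) := fun q q' =>
  inferInstanceAs (Decidable (q' = q ∨ q = (j, true) ∧ q' = (i, true)))

lemma isChain_pullLetter : ∀ {i j : Fin 2}, i ≠ j → ∀ {q r q' : Fin 2 × Bool}, Admissible q r →
    CanEndPull i j q q' → List.IsChain Admissible (q' :: pullLetter i j q r) ∧
      CanEndPull i j r ((pullLetter i j q r).getLastD q') := by
  decide

lemma isChain_pullWord (hij : i ≠ j) {q q' : Fin 2 × Bool} {L : List (Fin 2 × Bool)}
    (h : List.IsChain Admissible (q :: L)) (hq : CanEndPull i j q q') :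
    List.IsChain Admissible (q' :: pullWord i j q L) ∧
      CanEndPull i j (L.getLastD q) ((pullWord i j q L).getLastD q') := by
  induction L generalizing q q' with
  | nil => exact ⟨List.isChain_singleton _, hq⟩
  | cons r L ih =>
    rw [List.isChain_cons_cons] at h
    obtain ⟨hchain, hend⟩ := isChain_pullLetter hij h.1 hq
    obtain ⟨ihchain, ihend⟩ := ih h.2 hend
    rw [pullWord, getLastD_append, List.getLastD_cons]
    exact ⟨isChain_cons_append hchain ihchain, ihend⟩

lemma negCount_le_pullLetter : ∀ {i j : Fin 2}, i ≠ j → ∀ {q r : Fin 2 × Bool}, Admissible q r →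
    negCount [r] ≤ negCount (pullLetter i j q r) := by
  decide

lemma negCount_append (L M : List (Fin 2 × Bool)) : negCount (L ++ M) = negCount L + negCount M :=
  List.countP_append

lemma negCount_le_pullWord (hij : i ≠ j) {q : Fin 2 × Bool} {L : List (Fin 2 × Bool)}
    (h : List.IsChain Admissible (q :: L)) : negCount L ≤ negCount (pullWord i j q L) := by
  induction L generalizing q with
  | nil => exact le_rfl
  | cons r L ih =>
    rw [List.isChain_cons_cons] at h
    rw [pullWord, negCount_append, ← List.singleton_append, negCount_append]
    exact Nat.add_le_add (negCount_le_pullLetter hij h.1) (ih h.2)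

lemma negCount_lt_or_pullLetter_mem : ∀ {i j : Fin 2}, i ≠ j → ∀ {q r : Fin 2 × Bool},
    Admissible q r → q ≠ (j, false) → negCount [r] < negCount (pullLetter i j q r) ∨
      r ≠ (j, false) ∧
        pullLetter i j q r ∈ [[], [(i, true)], [(j, true)], [(j, true), (i, false)]] := by
  decide

lemma transvection_mk_mem_signCone (hij : i ≠ j) {L : List (Fin 2 × Bool)}
    (hL : L ∈ [[], [(i, true)], [(j, true)], [(j, true), (i, false)]]) :
    transvection true j (FreeGroup.mk L) ∈ signCone fun _ => true := by
  have hi := letter_mem_signCone (fun _ => true) i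
  have hj := letter_mem_signCone (fun _ => true) j
  have hself := transvection_of_self true hij.symm
  have hne := transvection_of_ne true hij.symm
  simp only [List.mem_cons, List.not_mem_nil, or_false] at hL
  rw [letter_true] at hi hj
  obtain rfl | rfl | rfl | rfl := hL
  · rw [← FreeGroup.one_eq_mk, map_one]
    exact one_mem _
  · exact hne.symm ▸ hi
  · exact hself.symm ▸ mul_mem hj hi
  · simpa [mk_cons, hself, hne, ← FreeGroup.one_eq_mk] using hj

/-- Unless the word begins inside a block of letters `j⁻¹`, either some letter contributes an
additional inverse letter, or all contributions are among `1`, `i`, `j` and `j * i⁻¹`, which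
`transvection true j` maps to positive elements. -/
lemma negCount_lt_or_transvection_mem_signCone (hij : i ≠ j) {q : Fin 2 × Bool}
    {L : List (Fin 2 × Bool)} (h : List.IsChain Admissible (q :: L)) (hq : q ≠ (j, false)) :
    negCount L < negCount (pullWord i j q L) ∨
      transvection true j (FreeGroup.mk (pullWord i j q L)) ∈ signCone fun _ => true := by
  induction L generalizing q with
  | nil =>
    rw [pullWord, ← FreeGroup.one_eq_mk, map_one]
    exact .inr (one_mem _)
  | cons r L ih =>
    rw [List.isChain_cons_cons] at h
    rw [pullWord, negCount_append, ← List.singleton_append, negCount_append, mk_append, map_mul]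
    obtain hlt | ⟨hr, hmem⟩ := negCount_lt_or_pullLetter_mem hij h.1 hq
    · exact .inl (Nat.add_lt_add_of_lt_of_le hlt (negCount_le_pullWord hij h.2))
    · refine (ih h.2 hr).imp
        (Nat.add_lt_add_of_le_of_lt (negCount_le_pullLetter hij h.1)) fun h => ?_
      exact mul_mem (transvection_mk_mem_signCone hij hmem) h

lemma exists_mk_eq_zpow {α : Type*} {i : α} {L : List (α × Bool)} (h : ∀ x ∈ L, x.1 = i) :
    ∃ k : ℤ, FreeGroup.mk L = .of i ^ k := by
  induction L with
  | nil => exact ⟨0, (zpow_zero _).symm⟩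
  | cons x L ih =>
    obtain ⟨k, hk⟩ := ih fun y hy => h y (List.mem_cons_of_mem _ hy)
    obtain ⟨_, d⟩ := x
    obtain rfl := h _ List.mem_cons_self
    rw [mk_cons, hk]
    cases d
    · exact ⟨-1 + k, by rw [letter_false, zpow_add, zpow_neg_one]⟩
    · exact ⟨1 + k, by rw [letter_true, zpow_add, zpow_one]⟩

lemma isConj_of_isConj_map {G H : Type*} [Group G] [Group H] (φ : G ≃* H) {v w : G}
    (h : IsConj (φ v) (φ w)) : IsConj v w := by
  simpa using φ.symm.toMonoidHom.map_isConj h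

lemma exists_hasAdmissibleForm_of_isChain (hij : i ≠ j) {u : F} {x : Fin 2 × Bool} (hx : x.1 = i)
    {M : List (Fin 2 × Bool)} (hM : List.IsChain Admissible (x :: (M ++ [x])))
    (hu : IsConj (transvection true i u) (FreeGroup.mk (M ++ [x]))) :
    ∃ n, HasAdmissibleForm u n ∧ (negCount (M ++ [x]) < n ∨
      ConjMem (signCone fun _ => true) (transvection true j u)) := by
  have hconj : IsConj u (FreeGroup.mk (pullWord i j x (M ++ [x]))) := by
    refine isConj_of_isConj_map (transvection true i) (hu.trans ?_)
    rw [transvection_mk_pullWord hij hM, List.getLastD_concat]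
    exact isConj_iff.2 ⟨(heldBack i j x)⁻¹, by rw [inv_inv]⟩
  obtain ⟨hchain, hend⟩ := isChain_pullWord hij hM (.inl rfl : CanEndPull i j x x)
  have hclosed : (pullWord i j x (M ++ [x])).getLastD x = x := by
    rw [List.getLastD_concat] at hend
    exact hend.resolve_right fun h => hij (hx.symm.trans (congrArg Prod.fst h.1))
  refine ⟨_, ⟨_, cycle_chain_of_getLastD_eq hchain hclosed, hconj, rfl⟩, ?_⟩
  refine (negCount_lt_or_transvection_mem_signCone hij hM ?_).imp_right fun h => ?_
  · rintro rfl
    exact hij hx.symm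
  · refine ConjMem.of_isConj ⟨1, ?_⟩ ((transvection true j).toMonoidHom.map_isConj hconj.symm)
    simpa using h

lemma exists_hasAdmissibleForm (hij : i ≠ j) {u : F} {m : ℕ}
    (h : HasAdmissibleForm (transvection true i u) m) :
    ∃ n, HasAdmissibleForm u n ∧ (m < n ∨ IsSignCoherent u ∨
      ConjMem (signCone fun _ => true) (transvection true j u)) := by
  obtain ⟨L, hL, hu, rfl⟩ := h
  by_cases hi : ∃ x ∈ L, x.1 = i
  · obtain ⟨x, hxL, hx⟩ := hi
    obtain ⟨L₁, L₂, rfl⟩ := List.append_of_mem hxL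
    have hrot : L₁ ++ x :: L₂ ~r (L₂ ++ L₁) ++ [x] := by
      rw [List.append_assoc, ← List.singleton_append, ← List.append_assoc]
      exact List.isRotated_append
    have hcount : negCount (L₁ ++ x :: L₂) = negCount ((L₂ ++ L₁) ++ [x]) :=
      hrot.perm.countP_eq _
    rw [Cycle.coe_eq_coe.2 hrot, ← Cycle.coe_cons_eq_coe_append, Cycle.chain_coe_cons] at hL
    obtain ⟨n, hn, h⟩ :=
      exists_hasAdmissibleForm_of_isChain hij hx hL (hu.trans (isConj_mk_of_isRotated hrot))
    exact ⟨n, hn, h.imp hcount.trans_lt .inr⟩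
  · obtain ⟨k, hk⟩ : ∃ k : ℤ, FreeGroup.mk L = .of j ^ k :=
      exists_mk_eq_zpow fun x hx => by have : x.1 ≠ i := fun h => hi ⟨x, hx, h⟩; omega
    have huL : IsConj u (FreeGroup.mk L) := by
      refine isConj_of_isConj_map (transvection true i) ?_
      rwa [hk, map_zpow, transvection_of_ne true hij, ← hk]
    exact ⟨_, ⟨L, hL, huL, rfl⟩, .inr (.inl (.of_isConj_zpow (hk ▸ huL)))⟩

end PullBack

section ChainBound

lemma exists_chain_true_of_conjMem {l : List (Fin 2)} {u : F}
    (h : ConjMem (signCone fun _ => true) (chain true l u)) :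
    ∃ n, HasAdmissibleForm u n ∧ ∃ l', l'.length ≤ n + 1 ∧ IsSignCoherent (chain true l' u) := by
  induction l using List.reverseRecOn generalizing u with
  | nil => exact ⟨0, h.hasAdmissibleForm, [], by simp, _, h⟩
  | append_singleton l i ih =>
    rw [chain_concat, MulAut.mul_apply] at h
    obtain ⟨m, hm, l', hl', hcoh⟩ := ih h
    obtain ⟨j, hji⟩ := exists_ne i
    obtain ⟨n, hn, hlt | hu | hpos⟩ := exists_hasAdmissibleForm hji.symm hm
    · refine ⟨n, hn, l' ++ [i], ?_, by rwa [chain_concat]⟩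
      rw [List.length_append, List.length_singleton]
      omega
    · exact ⟨n, hn, [], by simp, hu⟩
    · exact ⟨n, hn, [j], by simp, _, hpos⟩

lemma exists_chain_true_le_cyclen_of_conjMem {l : List (Fin 2)} {u : F}
    (h : ConjMem (signCone fun _ => true) (chain true l u)) :
    ∃ l', l'.length ≤ cyclen u + 1 ∧ IsSignCoherent (chain true l' u) := by
  obtain ⟨n, hn, l', hl', hcoh⟩ := exists_chain_true_of_conjMem h
  exact ⟨l', hl'.trans (Nat.add_le_add_right hn.le_cyclen 1), hcoh⟩

lemma conjMem_of_conjMem_chain_true {s : Fin 2 → Bool} (hs : s 0 ≠ s 1) {l : List (Fin 2)} {u : F}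
    (h : ConjMem (signCone s) (chain true l u)) : ConjMem (signCone s) u := by
  induction l generalizing u with
  | nil => exact h
  | cons i l ih =>
    have hinv : transvection false i * transvection true i = 1 := transvection_not_mul_self true i
    have heq : transvection false i (chain true (i :: l) u) = chain true l u := by
      rw [chain_cons, ← MulAut.mul_apply, ← mul_assoc, hinv, one_mul]
    exact ih (heq ▸ h.map (signCone_le_comap_transvection_false hs i))

lemma exists_chain_true_le_cyclen {l : List (Fin 2)} {u : F}
    (h : IsSignCoherent (chain true l u)) :
    ∃ l', l'.length ≤ cyclen u + 1 ∧ IsSignCoherent (chain true l' u) := by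
  obtain ⟨s, hs⟩ := h
  by_cases hs01 : s 0 = s 1
  · have hconst : s = fun _ => s 0 := by
      ext i
      fin_cases i
      exacts [rfl, hs01.symm]
    rw [hconst] at hs
    cases hs0 : s 0 with
    | true =>
      rw [hs0] at hs
      exact exists_chain_true_le_cyclen_of_conjMem hs
    | false =>
      rw [hs0] at hs
      have hinv : ConjMem (signCone fun _ => true) (chain true l u⁻¹) := by
        rw [map_inv]
        exact hs.inv fun _ => inv_mem_signCone
      obtain ⟨l', hl', hcoh⟩ := exists_chain_true_le_cyclen_of_conjMem hinv
      refine ⟨l', hl'.trans (Nat.add_le_add_right (cyclen_inv_le u) 1), ?_⟩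
      rw [← inv_inv u, map_inv]
      exact hcoh.inv
  · exact ⟨[], by simp, s, conjMem_of_conjMem_chain_true hs01 hs⟩

lemma exists_chain_false_mul_signFlip {s : Fin 2 → Bool} (hs : s 0 ≠ s 1) (l : List (Fin 2)) :
    ∃ g, chain false l * signFlip s = MulAut.conj g * signFlip s * chain true l := by
  induction l with
  | nil => exact ⟨1, by simp⟩
  | cons i l ih =>
    obtain ⟨g, hg⟩ := ih
    obtain ⟨j, hji⟩ := exists_ne i
    have hsij : (false == (s i == s j)) = true := by
      obtain ⟨rfl, rfl⟩ | ⟨rfl, rfl⟩ : i = 0 ∧ j = 1 ∨ i = 1 ∧ j = 0 := by omega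
      · simpa using hs
      · simpa using hs.symm
    refine ⟨transvection false i g * (if s i then 1 else letter (j, !false)), ?_⟩
    rw [chain_cons, chain_cons, mul_assoc, hg, ← mul_assoc, ← mul_assoc, mulAut_mul_conj,
      mul_assoc (MulAut.conj _) (transvection false i), transvection_mul_signFlip _ hji.symm, hsij,
      map_mul]
    simp only [mul_assoc]

lemma isSignCoherent_chain_false_iff {s : Fin 2 → Bool} (hs : s 0 ≠ s 1) (l : List (Fin 2))
    (u : F) :
    IsSignCoherent (chain false l (signFlip s u)) ↔ IsSignCoherent (chain true l u) := by
  obtain ⟨g, hg⟩ := exists_chain_false_mul_signFlip hs l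
  rw [← MulAut.mul_apply, hg, mul_assoc, MulAut.mul_apply]
  refine ⟨fun h => ?_, fun h => ?_⟩
  · exact .of_mem_monomialAut (signFlip_mem_monomialAut s) (h.of_isConj (isConj_mulAut_conj _ _))
  · exact (h.map_signFlip s).of_isConj (isConj_mulAut_conj _ _).symm

lemma exists_chain_le_cyclen {e : Bool} {l : List (Fin 2)} {u : F}
    (h : IsSignCoherent (chain e l u)) :
    ∃ l', l'.length ≤ cyclen u + 1 ∧ IsSignCoherent (chain e l' u) := by
  cases e with
  | true => exact exists_chain_true_le_cyclen h
  | false =>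
    have hs : ![true, false] 0 ≠ ![true, false] 1 := by decide
    have hu : signFlip ![true, false] (signFlip ![true, false] u) = u := by
      rw [← MulAut.mul_apply, signFlip_mul_self, MulAut.one_apply]
    rw [← hu, isSignCoherent_chain_false_iff hs] at h
    obtain ⟨l', hl', hcoh⟩ := exists_chain_true_le_cyclen h
    refine ⟨l', hl'.trans (Nat.add_le_add_right (cyclen_signFlip_le _ u) 1), ?_⟩
    rwa [← isSignCoherent_chain_false_iff hs, hu] at hcoh

/-- The exponents `(l, m)` for which `τ ^ m * σ ^ l` is the transvection with index `i`. -/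
def transvectionExponents (i : Fin 2) : ℕ × ℕ := if i = 0 then (1, 0) else (0, 1)

lemma chainLen_cons (p : ℕ × ℕ) (c : List (ℕ × ℕ)) :
    chainLen (p :: c) = p.1 + p.2 + chainLen c := by
  simp only [chainLen, sigmaCount, tauCount, List.map_cons, List.sum_cons]
  omega

lemma chainLen_map_transvectionExponents (l : List (Fin 2)) :
    chainLen (l.map transvectionExponents) = l.length := by
  induction l with
  | nil => rfl
  | cons i l ih =>
    have hi : (transvectionExponents i).1 + (transvectionExponents i).2 = 1 := by
      fin_cases i <;> rfl
    rw [List.map_cons, chainLen_cons, ih, hi, List.length_cons, add_comm]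

lemma chainC1_map_transvectionExponents (l : List (Fin 2)) :
    chainC1 (l.map transvectionExponents) = chain true l := by
  rw [chainC1, chain, List.map_map]
  refine congrArg List.prod (List.map_congr_left fun i _ => ?_)
  fin_cases i <;> simp [transvectionExponents, transvection]

lemma chainC2_map_transvectionExponents (l : List (Fin 2)) :
    chainC2 (l.map transvectionExponents) = chain false l := by
  rw [chainC2, chain, List.map_map]
  refine congrArg List.prod (List.map_congr_left fun i _ => ?_)
  fin_cases i <;> simp [transvectionExponents, transvection]

lemma exists_chainC1_or_chainC2_eq (e : Bool) (l : List (Fin 2)) :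
    ∃ c : List (ℕ × ℕ), c ≠ [] ∧ chainLen c = l.length ∧
      (chain e l = chainC1 c ∨ chain e l = chainC2 c) := by
  refine ⟨(0, 0) :: l.map transvectionExponents, List.cons_ne_nil _ _, ?_, ?_⟩
  · simp [chainLen_cons, chainLen_map_transvectionExponents]
  · cases e
    · right
      rw [← chainC2_map_transvectionExponents]
      simp [chainC2]
    · left
      rw [← chainC1_map_transvectionExponents]
      simp [chainC1]

end ChainBound

theorem stmt1_general (u : F)
    (h : ∃ φ : MulAut F, ∃ g : F, IsPositive (g * φ u * g⁻¹)) :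
    ∃ c : List (ℕ × ℕ), c ≠ [] ∧ chainLen c ≤ cyclen u + 1 ∧
      ∃ ψ : MulAut F, (ψ = chainC1 c ∨ ψ = chainC2 c) ∧
        ∃ β : MulAut F, IsW1 β ∧ ∃ g : F, IsPositive (g * β (ψ u) * g⁻¹) := by
  obtain ⟨φ, g, hg⟩ := h
  obtain ⟨k, hk, e, l, rfl⟩ := exists_eq_mul_chain φ
  have hcoh : IsSignCoherent (chain e l u) :=
    .of_mem_monomialAut hk ⟨_, g, isPositive_iff.1 hg⟩
  obtain ⟨l', hl', hcoh'⟩ := exists_chain_le_cyclen hcoh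
  obtain ⟨c, hc, hlen, hψ⟩ := exists_chainC1_or_chainC2_eq e l'
  exact ⟨c, hc, hlen.trans_le hl', _, hψ, hcoh'.exists_isW1⟩

/-- If some conjugate of `φ(u)` is positive for some automorphism `φ`, then this already
happens for `β ∘ ψ` with `β` of type (W1) and `ψ` a chain of type (C1) or (C2) of length
at most `2‖u‖+3`. -/
theorem stmt1 (u : F)
    (h : ∃ φ : MulAut F, ∃ g : F, IsPositive (g * φ u * g⁻¹)) :
    ∃ c : List (ℕ × ℕ), c ≠ [] ∧ chainLen c ≤ 2 * cyclen u + 3 ∧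
      ∃ ψ : MulAut F, (ψ = chainC1 c ∨ ψ = chainC2 c) ∧
        ∃ β : MulAut F, IsW1 β ∧ ∃ g : F, IsPositive (g * β (ψ u) * g⁻¹) := by
  obtain ⟨c, hc, hlen, hψ⟩ := stmt1_general u h
  exact ⟨c, hc, by omega, hψ⟩
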